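/- arXiv:2410.19947 — 3 statements merged into one kernel-verified Lean document; each statement's English description precedes it below -/
import Mathlib

section
/- Let (X_1, ..., X_n) be a random vector on a probability space whose joint distribution is multivariate normal with arbitrary mean vector and covariance matrix, and suppose that almost surely the coordinates X_1(ω), ..., X_n(ω) are pairwise distinct. For r ∈ {1, ..., n}, let X^{(r)} denote the r-th order statistic of X_1, ..., X_n (i.e., X^{(r)}(ω) is the r-th largest value among X_1(ω), ..., X_n(ω)). Then Cov(X_1, X^{(r)}) = Σ_{i=1}^n Cov(X_1, X_i) · P(X_i = X^{(r)}). -/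
/-!
The identity is Stein's lemma `Cov(X₀, F(X)) = E[D F(X)]`, where `D` is the derivative in the
direction `c = (Cov(X₀, Xᵢ))ᵢ`, applied to the order statistic `F`.

Stein's lemma (`OrderStatCov.stein`) is obtained by differentiating the Cameron–Martin formula
`E[F(X) exp(t X₀)] = exp(t m₀ + t² S₀₀ / 2) E[F(X + t c)]` (`OrderStatCov.integral_mul_exp`) at
`t = 0`. The formula itself says that tilting by `exp(t X₀)` translates the law of `X` by `t c`;
it holds because both laws give each linear functional the same moment generating function, so no
nondegeneracy of `S` is needed.

An order statistic is `1`-Lipschitz for the sup norm, since its sublevel sets are described by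
counting the entries below a threshold. At a tuple with distinct entries it coincides near that
tuple with a fixed coordinate function, so its derivative in the direction `c` is `cᵢ` for the index
`i` occupying the rank in question; the expectation of this derivative is the sum on the right-hand
side.
-/

open MeasureTheory ProbabilityTheory Real

/-- Covariance of two real random variables: `Cov(X, Y) = E[X*Y] - E[X] * E[Y]`. -/
noncomputable def covar {Ω : Type*} [MeasurableSpace Ω] (μ : Measure Ω) (X Y : Ω → ℝ) : ℝ :=
  (∫ ω, X ω * Y ω ∂μ) - (∫ ω, X ω ∂μ) * (∫ ω, Y ω ∂μ)

/-- The `r`-th order statistic (with `r = 0` the largest and `r = n - 1` the smallest) of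
the random variables `X 0, ..., X (n-1)`: pointwise, the `r`-th largest value among
`X 0 ω, ..., X (n-1) ω`. -/
noncomputable def orderStat {Ω : Type*} {n : ℕ} (X : Fin n → Ω → ℝ) (r : Fin n) (ω : Ω) : ℝ :=
  X (Tuple.sort (fun i => X i ω) r.rev) ω

/-- `(X 0, ..., X (n-1))` is a multivariate normal vector with mean vector `m` and
(positive semidefinite) covariance matrix `S`: every linear combination of the
coordinates is one-dimensional Gaussian with the corresponding mean and variance. -/
def IsMultivariateGaussian {Ω : Type*} [MeasurableSpace Ω] (μ : Measure Ω) {n : ℕ}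
    (X : Fin n → Ω → ℝ) (m : Fin n → ℝ) (S : Matrix (Fin n) (Fin n) ℝ) : Prop :=
  S.PosSemidef ∧ ∀ a : Fin n → ℝ,
    Measure.map (fun ω => ∑ i, a i * X i ω) μ =
      gaussianReal (∑ i, a i * m i) (Real.toNNReal (∑ i, ∑ j, a i * S i j * a j))

open Topology NNReal

namespace OrderStatCov

/-! ### Cameron–Martin formula and Stein's identity -/

section Gaussian

variable {Ω : Type*} [MeasurableSpace Ω] {μ : Measure Ω} {n : ℕ}
  {X : Fin (n + 1) → Ω → ℝ} {m : Fin (n + 1) → ℝ} {S : Matrix (Fin (n + 1)) (Fin (n + 1)) ℝ}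

lemma quadForm_nonneg (hS : S.PosSemidef) (a : Fin (n + 1) → ℝ) :
    0 ≤ ∑ i, ∑ j, a i * S i j * a j := by
  have h := hS.dotProduct_mulVec_nonneg a
  simpa [dotProduct, Matrix.mulVec, Finset.mul_sum, mul_assoc] using h

lemma integral_exp_linear (hgauss : IsMultivariateGaussian μ X m S) (a : Fin (n + 1) → ℝ) :
    ∫ ω, exp (∑ i, a i * X i ω) ∂μ =
      exp (∑ i, a i * m i + (∑ i, ∑ j, a i * S i j * a j) / 2) := by
  have h := mgf_gaussianReal (hgauss.2 a) 1
  rw [Real.coe_toNNReal _ (quadForm_nonneg hgauss.1 a)] at h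
  simpa [mgf] using h

lemma integrable_exp_linear (hgauss : IsMultivariateGaussian μ X m S) (a : Fin (n + 1) → ℝ) :
    Integrable (fun ω => exp (∑ i, a i * X i ω)) μ := by
  by_contra h
  have h1 := integral_exp_linear hgauss a
  rw [integral_undef h] at h1
  exact (exp_pos _).ne h1

lemma integrable_exp_coord (hgauss : IsMultivariateGaussian μ X m S) (i : Fin (n + 1)) (t : ℝ) :
    Integrable (fun ω => exp (t * X i ω)) μ := by
  simpa [Pi.single_apply] using integrable_exp_linear hgauss (Pi.single i t)

lemma integral_exp_coord (hgauss : IsMultivariateGaussian μ X m S) (i : Fin (n + 1)) (t : ℝ) :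
    ∫ ω, exp (t * X i ω) ∂μ = exp (t * m i + t * S i i * t / 2) := by
  simpa [Pi.single_apply] using integral_exp_linear hgauss (Pi.single i t)

lemma memLp_coord (hgauss : IsMultivariateGaussian μ X m S) (i : Fin (n + 1)) :
    MemLp (X i) 2 μ := by
  refine memLp_of_mem_interior_integrableExpSet (p := 2) ?_
  have : integrableExpSet (X i) μ = Set.univ :=
    Set.eq_univ_of_forall fun t => integrable_exp_coord hgauss i t
  simp [this]

/-- The quadratic form of `S` at `t • e₀ + s • a`. -/
lemma quadForm_add_single (hS : S.PosSemidef) (t s : ℝ) (a : Fin (n + 1) → ℝ) :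
    ∑ i, ∑ j, ((Pi.single 0 t : Fin (n + 1) → ℝ) i + s * a i) * S i j *
        ((Pi.single 0 t : Fin (n + 1) → ℝ) j + s * a j) =
      t * S 0 0 * t + 2 * t * s * ∑ j, a j * S 0 j + s ^ 2 * ∑ i, ∑ j, a i * S i j * a j := by
  have hsymm : ∀ i j, S i j = S j i := fun i j => by
    simpa using (hS.1.apply i j).symm
  have h1 : ∀ i, ∑ j, ((Pi.single 0 t : Fin (n + 1) → ℝ) i + s * a i) * S i j *
        ((Pi.single 0 t : Fin (n + 1) → ℝ) j + s * a j) =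
      (Pi.single 0 t : Fin (n + 1) → ℝ) i * (S i 0 * t + s * ∑ j, a j * S i j) +
        s * t * (a i * S 0 i) + s ^ 2 * ∑ j, a i * S i j * a j := by
    intro i
    have : ∀ j, ((Pi.single 0 t : Fin (n + 1) → ℝ) i + s * a i) * S i j *
        ((Pi.single 0 t : Fin (n + 1) → ℝ) j + s * a j) =
        ((Pi.single 0 t : Fin (n + 1) → ℝ) i + s * a i) * S i j *
          (Pi.single 0 t : Fin (n + 1) → ℝ) j +
        (Pi.single 0 t : Fin (n + 1) → ℝ) i * s * (a j * S i j) +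
        s ^ 2 * (a i * S i j * a j) := fun j => by ring
    simp_rw [this, Finset.sum_add_distrib, ← Finset.mul_sum]
    have h2 : ∑ j, ((Pi.single 0 t : Fin (n + 1) → ℝ) i + s * a i) * S i j *
          (Pi.single 0 t : Fin (n + 1) → ℝ) j =
        ((Pi.single 0 t : Fin (n + 1) → ℝ) i + s * a i) * S i 0 * t := by
      simp [Pi.single_apply]
    rw [h2, hsymm i 0]
    ring
  simp_rw [h1, Finset.sum_add_distrib, ← Finset.mul_sum]
  have h2 : ∑ i, (Pi.single 0 t : Fin (n + 1) → ℝ) i * (S i 0 * t + s * ∑ j, a j * S i j) =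
      t * (S 0 0 * t + s * ∑ j, a j * S 0 j) := by
    simp [Pi.single_apply]
  rw [h2]
  ring

variable [IsProbabilityMeasure μ]

/-- Under the exponential tilt by `t * X 0`, every linear combination of the coordinates is
distributed as it is for the shifted vector `X + t * S 0 ·` under `μ`: the two have the same moment
generating function, finite everywhere, which determines the law. -/
lemma map_tilted_linear (hmeas : ∀ i, Measurable (X i))
    (hgauss : IsMultivariateGaussian μ X m S) (t : ℝ) (a : Fin (n + 1) → ℝ) :
    (μ.tilted (fun ω => t * X 0 ω)).map (fun ω => ∑ i, a i * X i ω) =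
      μ.map (fun ω => ∑ i, a i * (X i ω + t * S 0 i)) := by
  have hprob : IsProbabilityMeasure (μ.tilted (fun ω => t * X 0 ω)) :=
    isProbabilityMeasure_tilted (integrable_exp_coord hgauss 0 t)
  have hl : ∀ s ω, exp (s * ∑ i, a i * (X i ω + t * S 0 i)) =
      exp (s * t * ∑ i, a i * S 0 i) * exp (∑ i, (s * a i) * X i ω) := by
    intro s ω
    rw [← exp_add]
    congr 1
    simp only [Finset.mul_sum, ← Finset.sum_add_distrib]
    exact Finset.sum_congr rfl fun i _ => by ring
  have hmgf : mgf (fun ω => ∑ i, a i * (X i ω + t * S 0 i)) μ =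
      mgf (fun ω => ∑ i, a i * X i ω) (μ.tilted (fun ω => t * X 0 ω)) := by
    funext s
    have hr : ∀ ω, exp (t * X 0 ω) * exp (s * ∑ i, a i * X i ω) =
        exp (∑ i, ((Pi.single 0 t : Fin (n + 1) → ℝ) i + s * a i) * X i ω) := by
      intro ω
      rw [← exp_add]
      simp [add_mul, Finset.sum_add_distrib, Pi.single_apply, Finset.mul_sum, mul_assoc]
    simp only [mgf]
    rw [integral_tilted]
    simp_rw [smul_eq_mul, div_mul_eq_mul_div, hr, hl]
    rw [integral_div, integral_const_mul, integral_exp_linear hgauss, integral_exp_linear hgauss,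
      integral_exp_coord hgauss, ← exp_sub, ← exp_add, quadForm_add_single hgauss.1]
    congr 1
    have e1 : ∑ i, ((Pi.single 0 t : Fin (n + 1) → ℝ) i + s * a i) * m i =
        t * m 0 + ∑ i, s * a i * m i := by
      simp [add_mul, Finset.sum_add_distrib, Pi.single_apply]
    have e2 : ∑ i, ∑ j, s * a i * S i j * (s * a j) =
        s ^ 2 * ∑ i, ∑ j, a i * S i j * a j := by
      simp only [Finset.mul_sum]
      exact Finset.sum_congr rfl fun i _ => Finset.sum_congr rfl fun j _ => by ring
    rw [e1, e2]
    ring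
  have huniv : integrableExpSet (fun ω => ∑ i, a i * (X i ω + t * S 0 i)) μ = Set.univ := by
    refine Set.eq_univ_of_forall fun s => ?_
    change Integrable _ _
    simp_rw [hl]
    exact (integrable_exp_linear hgauss _).const_mul _
  have hEq := eqOn_complexMGF_of_mgf hmgf
  refine (Measure.ext_of_complexMGF_eq (by fun_prop) (by fun_prop) ?_).symm
  funext z
  exact hEq (by simp [huniv])

/-- The Cameron–Martin formula in the direction of `X 0`: tilting by `exp (t * X 0)` translates the
law of the vector by `t` times the row `S 0 ·` of the covariance matrix. Since the characteristic
function at a functional `L` only depends on the law of `L X`, the case of linear combinations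
suffices. -/
lemma map_tilted (hmeas : ∀ i, Measurable (X i))
    (hgauss : IsMultivariateGaussian μ X m S) (t : ℝ) :
    (μ.tilted (fun ω => t * X 0 ω)).map (fun ω i => X i ω) =
      μ.map (fun ω i => X i ω + t * S 0 i) := by
  have hprob : IsProbabilityMeasure (μ.tilted (fun ω => t * X 0 ω)) :=
    isProbabilityMeasure_tilted (integrable_exp_coord hgauss 0 t)
  refine Measure.ext_of_charFunDual ?_
  funext L
  have hL : ∀ x : Fin (n + 1) → ℝ, L x = ∑ i, L (Pi.single i 1) * x i := by
    intro x
    conv_lhs => rw [← Finset.univ_sum_single x, map_sum]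
    refine Finset.sum_congr rfl fun i _ => ?_
    have : (Pi.single i (x i) : Fin (n + 1) → ℝ) = x i • Pi.single i 1 := by
      rw [← Pi.single_smul]; simp
    rw [this, map_smul, smul_eq_mul, mul_comm]
  rw [charFunDual_eq_charFun_map_one, charFunDual_eq_charFun_map_one,
    Measure.map_map (by fun_prop) (by fun_prop), Measure.map_map (by fun_prop) (by fun_prop)]
  have h := map_tilted_linear hmeas hgauss t (fun i => L (Pi.single i 1))
  congr 1
  convert! h using 2
  · funext ω; exact hL _
  · funext ω; exact hL _

lemma integral_mul_exp (hmeas : ∀ i, Measurable (X i))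
    (hgauss : IsMultivariateGaussian μ X m S) {F : (Fin (n + 1) → ℝ) → ℝ} (hF : Measurable F)
    (t : ℝ) :
    ∫ ω, F (fun i => X i ω) * exp (t * X 0 ω) ∂μ =
      exp (t * m 0 + t * S 0 0 * t / 2) * ∫ ω, F (fun i => X i ω + t * S 0 i) ∂μ := by
  have h1 : ∫ ω, F (fun i => X i ω) ∂(μ.tilted (fun ω => t * X 0 ω)) =
      ∫ ω, F (fun i => X i ω + t * S 0 i) ∂μ := by
    rw [← integral_map (φ := fun ω i => X i ω) (f := F) (by fun_prop)
        hF.aestronglyMeasurable, map_tilted hmeas hgauss,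
      integral_map (by fun_prop) hF.aestronglyMeasurable]
  rw [← h1, integral_tilted, integral_exp_coord hgauss, ← integral_const_mul]
  congr 1
  funext ω
  have := (exp_pos (t * m 0 + t * S 0 0 * t / 2)).ne'
  rw [smul_eq_mul]
  field_simp

lemma memLp_lipschitz (hmeas : ∀ i, Measurable (X i))
    (hgauss : IsMultivariateGaussian μ X m S) {F : (Fin (n + 1) → ℝ) → ℝ} {K : ℝ≥0}
    (hF : LipschitzWith K F) :
    MemLp (fun ω => F (fun i => X i ω)) 2 μ := by
  have hsum1 : MemLp (fun ω => ∑ i, |X i ω|) 2 μ :=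
    memLp_finsetSum _ fun i _ => (memLp_coord hgauss i).abs
  have hsum : MemLp (fun ω => |F 0| + K * ∑ i, |X i ω|) 2 μ :=
    MemLp.add (memLp_const _) (hsum1.const_mul _)
  refine hsum.mono' (hF.continuous.measurable.comp (by fun_prop)).aestronglyMeasurable ?_
  refine Filter.Eventually.of_forall fun ω => ?_
  have h1 := hF.dist_le_mul (fun i => X i ω) 0
  rw [Real.dist_eq, dist_zero_right] at h1
  have h2 : ‖fun i => X i ω‖ ≤ ∑ i, |X i ω| := by
    refine (pi_norm_le_iff_of_nonneg (Finset.sum_nonneg fun i _ => abs_nonneg _)).2 fun i => ?_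
    exact Finset.single_le_sum (f := fun i => |X i ω|) (fun i _ => abs_nonneg _)
      (Finset.mem_univ i)
  have h3 := mul_le_mul_of_nonneg_left h2 K.2
  have h4 := abs_sub_abs_le_abs_sub (F fun i => X i ω) (F 0)
  rw [Real.norm_eq_abs]
  simp only [NNReal.val_eq_coe] at h3
  linarith

/-- Differentiation under the integral sign at `t = 0`. For `|t| < 1` the derivative of the integrand
is dominated by `|F X| * (exp (2 * X 0) + exp (-2 * X 0))`, a product of two `L²` functions. -/
lemma hasDerivAt_integral_mul_exp (hmeas : ∀ i, Measurable (X i))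
    (hgauss : IsMultivariateGaussian μ X m S) {F : (Fin (n + 1) → ℝ) → ℝ} {K : ℝ≥0}
    (hF : LipschitzWith K F) :
    HasDerivAt (fun t => ∫ ω, F (fun i => X i ω) * exp (t * X 0 ω) ∂μ)
      (∫ ω, X 0 ω * F (fun i => X i ω) ∂μ) 0 := by
  have hFX : Measurable fun ω => F (fun i => X i ω) := hF.continuous.measurable.comp (by fun_prop)
  have hL2 := memLp_lipschitz hmeas hgauss hF
  have hexp : ∀ s : ℝ, MemLp (fun ω => exp (s * X 0 ω)) 2 μ := by
    intro s
    rw [memLp_two_iff_integrable_sq (by fun_prop)]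
    have := integrable_exp_coord hgauss 0 (2 * s)
    convert! this using 2 with ω
    rw [← exp_nat_mul]
    congr 1
    push_cast
    ring
  have hbound : Integrable (fun ω => |F (fun i => X i ω)| *
      (exp (2 * X 0 ω) + exp (-2 * X 0 ω))) μ :=
    MemLp.integrable_mul hL2.norm ((hexp 2).add (hexp (-2)))
  have h := (hasDerivAt_integral_of_dominated_loc_of_deriv_le (μ := μ) (x₀ := (0 : ℝ))
    (F := fun t ω => F (fun i => X i ω) * exp (t * X 0 ω))
    (F' := fun t ω => F (fun i => X i ω) * (exp (t * X 0 ω) * X 0 ω))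
    (Metric.ball_mem_nhds 0 one_pos)
    (Filter.Eventually.of_forall fun t =>
      (hFX.mul (by fun_prop)).aestronglyMeasurable)
    (by simpa using hL2.integrable one_le_two)
    (hFX.mul (by fun_prop)).aestronglyMeasurable
    (Filter.Eventually.of_forall fun ω t ht => ?_) hbound
    (Filter.Eventually.of_forall fun ω t _ => ?_)).2
  · convert! h using 3 with ω
    simp [mul_comm]
  · rw [Metric.mem_ball, dist_zero_right, Real.norm_eq_abs] at ht
    rw [norm_mul, norm_mul, Real.norm_eq_abs, Real.norm_eq_abs, Real.norm_eq_abs, abs_exp]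
    refine mul_le_mul_of_nonneg_left ?_ (abs_nonneg _)
    have e1 : exp (t * X 0 ω) ≤ exp |X 0 ω| := by
      refine exp_le_exp.2 ((le_abs_self _).trans ?_)
      rw [abs_mul]
      exact mul_le_of_le_one_left (abs_nonneg _) ht.le
    have e2 : |X 0 ω| ≤ exp |X 0 ω| := by
      linarith [add_one_le_exp |X 0 ω|]
    calc exp (t * X 0 ω) * |X 0 ω| ≤ exp |X 0 ω| * exp |X 0 ω| :=
          mul_le_mul e1 e2 (abs_nonneg _) (exp_pos _).le
      _ = exp (2 * |X 0 ω|) := by rw [← exp_add, two_mul]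
      _ ≤ exp (2 * X 0 ω) + exp (-2 * X 0 ω) := by
          rcases abs_cases (X 0 ω) with ⟨h, _⟩ | ⟨h, _⟩ <;> rw [h]
          · linarith [exp_pos (-2 * X 0 ω)]
          · rw [show 2 * -X 0 ω = -2 * X 0 ω by ring]
            linarith [exp_pos (2 * X 0 ω)]
  · have := ((hasDerivAt_id t).mul_const (X 0 ω)).exp.const_mul (F (fun i => X i ω))
    simpa using this

/-- Stein's identity for a Lipschitz function `F` that is almost surely differentiable at `X` in the
direction `S 0 ·`, with derivative `D`. It is the derivative at `t = 0` of `integral_mul_exp`; the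
Lipschitz bound is what allows differentiating the right-hand side under the integral sign. -/
lemma stein (hmeas : ∀ i, Measurable (X i))
    (hgauss : IsMultivariateGaussian μ X m S) {F : (Fin (n + 1) → ℝ) → ℝ} {K : ℝ≥0}
    (hF : LipschitzWith K F) {D : Ω → ℝ} (hD : AEStronglyMeasurable D μ)
    (hderiv : ∀ᵐ ω ∂μ, HasDerivAt (fun t : ℝ => F (fun i => X i ω + t * S 0 i)) (D ω) 0) :
    ∫ ω, X 0 ω * F (fun i => X i ω) ∂μ =
      m 0 * ∫ ω, F (fun i => X i ω) ∂μ + ∫ ω, D ω ∂μ := by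
  have hL2 := memLp_lipschitz hmeas hgauss hF
  set C : ℝ≥0 := ‖fun i => S 0 i‖₊ with hC
  have hlip : ∀ ω, LipschitzWith (K * C) (fun t : ℝ => F (fun i => X i ω + t * S 0 i)) := by
    intro ω
    refine hF.comp (LipschitzWith.of_dist_le_mul fun s t => ?_)
    refine (dist_pi_le_iff (by positivity)).2 fun i => ?_
    have : |S 0 i| ≤ C := norm_le_pi_norm (fun i => S 0 i) i
    rw [Real.dist_eq, Real.dist_eq, show X i ω + s * S 0 i - (X i ω + t * S 0 i) =
      S 0 i * (s - t) by ring, abs_mul]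
    exact mul_le_mul_of_nonneg_right this (abs_nonneg _)
  have hR := (hasDerivAt_integral_of_dominated_loc_of_lip (μ := μ) (x₀ := (0 : ℝ))
    (F := fun (t : ℝ) ω => F (fun i => X i ω + t * S 0 i)) (F' := D)
    (bound := fun _ => ((K * C : ℝ≥0) : ℝ)) Filter.univ_mem
    (Filter.Eventually.of_forall fun t =>
      (hF.continuous.measurable.comp (by fun_prop)).aestronglyMeasurable)
    (by simpa using hL2.integrable one_le_two) hD
    (Filter.Eventually.of_forall fun ω => by
      simpa using (hlip ω).lipschitzOnWith (s := Set.univ))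
    (integrable_const _) hderiv).2
  have hM : HasDerivAt (fun t : ℝ => exp (t * m 0 + t * S 0 0 * t / 2)) (m 0) 0 := by
    have h := (((hasDerivAt_id (0 : ℝ)).mul_const (m 0)).add
      ((((hasDerivAt_id (0 : ℝ)).mul_const (S 0 0)).mul (hasDerivAt_id (0 : ℝ))).div_const 2)).exp
    simpa using h
  have hprod := hM.mul hR
  have hLeft := hasDerivAt_integral_mul_exp hmeas hgauss hF
  have heq : (fun t => ∫ ω, F (fun i => X i ω) * exp (t * X 0 ω) ∂μ) =
      fun t => exp (t * m 0 + t * S 0 0 * t / 2) * ∫ ω, F (fun i => X i ω + t * S 0 i) ∂μ :=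
    funext fun t => integral_mul_exp hmeas hgauss hF.continuous.measurable t
  rw [heq] at hLeft
  simpa using hLeft.unique hprod

lemma covar_lipschitz (hmeas : ∀ i, Measurable (X i))
    (hgauss : IsMultivariateGaussian μ X m S) {F : (Fin (n + 1) → ℝ) → ℝ} {K : ℝ≥0}
    (hF : LipschitzWith K F) {D : Ω → ℝ} (hD : AEStronglyMeasurable D μ)
    (hderiv : ∀ᵐ ω ∂μ, HasDerivAt (fun t : ℝ => F (fun i => X i ω + t * S 0 i)) (D ω) 0) :
    covar μ (X 0) (fun ω => F (fun i => X i ω)) = ∫ ω, D ω ∂μ := by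
  have h0 : ∫ ω, X 0 ω ∂μ = m 0 := by
    -- Stein's identity for the constant function `1` identifies the mean of `X 0`.
    have := stein hmeas hgauss (F := fun _ => 1) (K := 0) (LipschitzWith.const 1) (D := fun _ => 0)
      (by fun_prop) (Filter.Eventually.of_forall fun ω => hasDerivAt_const _ _)
    simpa using this
  rw [covar, h0, stein hmeas hgauss hF hD hderiv]
  ring

/-- Stein's identity for a coordinate function identifies the entry `S 0 i` as a covariance. -/
lemma covar_coord (hmeas : ∀ i, Measurable (X i))
    (hgauss : IsMultivariateGaussian μ X m S) (i : Fin (n + 1)) :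
    covar μ (X 0) (X i) = S 0 i := by
  have h := covar_lipschitz hmeas hgauss (F := fun x => x i) (K := 1) (LipschitzWith.eval i)
    (D := fun _ => S 0 i) (by fun_prop) (Filter.Eventually.of_forall fun ω => by
      simpa using ((hasDerivAt_id (0 : ℝ)).mul_const (S 0 i)).const_add (X i ω))
  simpa using h

end Gaussian

/-! ### Order statistics of a deterministic tuple -/

section OrderStatistic

variable {n : ℕ}

/-- The `k`-th smallest entry (counting from `0`) of the tuple `x`. -/
noncomputable def sorted (k : Fin n) (x : Fin n → ℝ) : ℝ := x (Tuple.sort x k)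

/-- Order statistics through counting: this makes them visibly monotone in the tuple. -/
lemma sorted_le_iff (k : Fin n) (x : Fin n → ℝ) (v : ℝ) :
    sorted k x ≤ v ↔ (k : ℕ) < (Finset.univ.filter fun i => x i ≤ v).card := by
  have h := Tuple.lt_card_le_iff_apply_le_of_monotone (j := k) (a := v) (Tuple.monotone_sort x)
  rw [sorted]
  have hc : (Finset.univ.filter fun i => (x ∘ Tuple.sort x) i ≤ v).card =
      (Finset.univ.filter fun i => x i ≤ v).card :=
    Finset.card_equiv (Tuple.sort x) (by simp)
  rw [← hc]
  exact h.symm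

lemma lipschitzWith_sorted (k : Fin n) : LipschitzWith 1 (sorted k) := by
  refine LipschitzWith.of_le_add fun x y => ?_
  rw [sorted_le_iff]
  refine lt_of_lt_of_le ((sorted_le_iff k y _).1 le_rfl) (Finset.card_le_card ?_)
  intro i hi
  simp only [Finset.mem_filter, Finset.mem_univ, true_and] at hi ⊢
  have h1 := (le_abs_self _).trans (dist_le_pi_dist x y i)
  linarith

/-- If the entries of `x` are distinct, a small perturbation of `x` is sorted by the same permutation.
-/
lemma sorted_eventually_eq (k : Fin n) {x : Fin n → ℝ} (hx : Function.Injective x)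
    (c : Fin n → ℝ) :
    ∀ᶠ t : ℝ in 𝓝 0, sorted k (fun i => x i + t * c i) =
      x (Tuple.sort x k) + t * c (Tuple.sort x k) := by
  have hmono : StrictMono (x ∘ Tuple.sort x) :=
    (Tuple.monotone_sort x).strictMono_of_injective (hx.comp (Tuple.sort x).injective)
  have hev : ∀ i j : Fin n, i < j → ∀ᶠ t : ℝ in 𝓝 0,
      x (Tuple.sort x i) + t * c (Tuple.sort x i) <
        x (Tuple.sort x j) + t * c (Tuple.sort x j) := by
    intro i j hij
    refine ContinuousAt.eventually_lt (by fun_prop) (by fun_prop) ?_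
    simpa using hmono hij
  have hall : ∀ᶠ t : ℝ in 𝓝 0, ∀ i j : Fin n, i < j →
      x (Tuple.sort x i) + t * c (Tuple.sort x i) <
        x (Tuple.sort x j) + t * c (Tuple.sort x j) := by
    simpa only [Filter.eventually_all] using hev
  filter_upwards [hall] with t ht
  have hm : StrictMono ((fun i => x i + t * c i) ∘ Tuple.sort x) := fun i j hij => ht i j hij
  exact (congrFun (Tuple.comp_sort_eq_comp_iff_monotone.2 hm.monotone) k).symm

/-- At a tuple with distinct entries the sum has a single nonzero term, at the index occupying
rank `k`. -/
lemma hasDerivAt_sorted (k : Fin n) {x : Fin n → ℝ} (hx : Function.Injective x)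
    (c : Fin n → ℝ) :
    HasDerivAt (fun t : ℝ => sorted k (fun i => x i + t * c i))
      (∑ i, if x i = sorted k x then c i else 0) 0 := by
  have hD : (∑ i, if x i = sorted k x then c i else 0) = c (Tuple.sort x k) := by
    simp [sorted, hx.eq_iff]
  rw [hD]
  have h : HasDerivAt (fun t : ℝ => x (Tuple.sort x k) + t * c (Tuple.sort x k))
      (c (Tuple.sort x k)) 0 := by
    simpa using ((hasDerivAt_id (0 : ℝ)).mul_const (c (Tuple.sort x k))).const_add
      (x (Tuple.sort x k))
  exact h.congr_of_eventuallyEq (sorted_eventually_eq k hx c)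

end OrderStatistic

end OrderStatCov

open OrderStatCov in
/-- **Rinott–Samuel-Cahn (1994), part (1).**
If `(X 0, ..., X n)` is multivariate normal with arbitrary mean vector and covariance
matrix and its coordinates are a.s. pairwise distinct, then for every rank `r`,
`Cov(X 0, X^{(r)}) = ∑ i, Cov(X 0, X i) * P(X i = X^{(r)})`. -/
theorem covar_orderStat_eq_sum {Ω : Type*} [MeasurableSpace Ω] (μ : Measure Ω)
    [IsProbabilityMeasure μ] {n : ℕ} (X : Fin (n + 1) → Ω → ℝ)
    (hmeas : ∀ i, Measurable (X i))
    (m : Fin (n + 1) → ℝ) (S : Matrix (Fin (n + 1)) (Fin (n + 1)) ℝ)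
    (hgauss : IsMultivariateGaussian μ X m S)
    (hdist : ∀ᵐ ω ∂μ, ∀ i j, i ≠ j → X i ω ≠ X j ω)
    (r : Fin (n + 1)) :
    covar μ (X 0) (orderStat X r) =
      ∑ i, covar μ (X 0) (X i) * (μ {ω | X i ω = orderStat X r ω}).toReal := by
  have hstat : orderStat X r = fun ω => sorted r.rev (fun i => X i ω) := rfl
  have hstat_meas : Measurable (orderStat X r) := by
    rw [hstat]
    exact (lipschitzWith_sorted r.rev).continuous.measurable.comp (by fun_prop)
  have hset : ∀ i, MeasurableSet {ω | X i ω = orderStat X r ω} := fun i =>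
    measurableSet_eq_fun (hmeas i) hstat_meas
  have hcov := covar_lipschitz hmeas hgauss (lipschitzWith_sorted r.rev)
    (D := fun ω => ∑ i, Set.indicator {ω | X i ω = orderStat X r ω} (fun _ => S 0 i) ω)
    (Finset.measurable_fun_sum _ fun i _ =>
      measurable_const.indicator (hset i)).aestronglyMeasurable
    (by
      filter_upwards [hdist] with ω hω
      have hinj : Function.Injective fun i => X i ω := fun i j hij => by
        by_contra hne
        exact hω i j hne hij
      simpa [Set.indicator_apply, hstat] using hasDerivAt_sorted r.rev hinj (fun i => S 0 i))
  rw [hstat, hcov, integral_finsetSum _ fun i _ => (integrable_const _).indicator (hset i)]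
  refine Finset.sum_congr rfl fun i _ => ?_
  rw [integral_indicator_const _ (hset i), covar_coord hmeas hgauss, smul_eq_mul, mul_comm]
  rfl
end

section
/- Let (X_1, ..., X_n) be a random vector whose joint distribution is multivariate normal with arbitrary mean vector and covariance matrix, and suppose that almost surely the coordinates X_1(ω), ..., X_n(ω) are pairwise distinct. For r ∈ {1, ..., n−1}, let X̃^{(r)} denote the r-th order statistic of the subvector (X_2, ..., X_n) (i.e., X̃^{(r)}(ω) is the r-th largest value among X_2(ω), ..., X_n(ω)). Then Cov(X_1, X̃^{(r)}) = Σ_{i=2}^n Cov(X_1, X_i) · P(X_i = X̃^{(r)}). -/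
/-!
The identity is Stein's lemma `E[X₀ f(X)] = E[X₀] E[f(X)] + E[∂_c f(X)]`, with `c = S 0 ·` the
vector of covariances of `X₀` with the coordinates, applied to the Lipschitz function `f` that
returns the `r`-th largest of the coordinates `1, ..., n`. When these coordinates are distinct, `f`
agrees near the point with a single coordinate, so `∂_c f = S 0 i` where `i` is the index realising
the order statistic; taking expectations yields `∑ i, S 0 i * P(X i = X̃^{(r)})`. The choices
`f = 1` and `f = x_j` in the same lemma identify `E[X₀] = m 0` and `Cov(X₀, X_j) = S 0 j`.

Stein's lemma for Lipschitz `f` (`stein_lipschitz`) is obtained without integration by parts, and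
hence without any nondegeneracy of `S`, by differentiating at `t = 0` the Cameron–Martin identity
`E[exp(t X₀) f(X)] = exp(t m₀ + t² S₀₀ / 2) E[f(X + t c)]`. That identity says that tilting `μ` by
`exp(t X₀)` shifts the law of `X` by `t c` (`map_tilted_eq_map_shift`): by Cramér–Wold it is enough
to compare the laws of linear forms, and these have equal, everywhere finite moment generating
functions.
-/

open MeasureTheory ProbabilityTheory Real

open Filter Topology

/-! ### Order statistics as functions of a real tuple -/

/-- The `r`-th largest entry of the tuple `y`, counted from `r = 0`; `orderStat X r ω` is by
definition its value at the tuple `fun i => X i ω`. -/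
noncomputable def rankVal {n : ℕ} (r : Fin n) (y : Fin n → ℝ) : ℝ := y (Tuple.sort y r.rev)

lemma rankVal_le_iff {n : ℕ} (r : Fin n) (y : Fin n → ℝ) (a : ℝ) :
    rankVal r y ≤ a ↔ (r.rev : ℕ) < (Finset.univ.filter fun i => y i ≤ a).card := by
  have h := Tuple.lt_card_le_iff_apply_le_of_monotone (a := a) (j := r.rev) (Tuple.monotone_sort y)
  rw [rankVal]
  refine h.symm.trans ?_
  have : (Finset.univ.filter fun i => (y ∘ Tuple.sort y) i ≤ a).card =
      (Finset.univ.filter fun i => y i ≤ a).card :=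
    Finset.card_equiv (Tuple.sort y) (by simp)
  rw [this]

lemma lipschitzWith_rankVal {n : ℕ} (r : Fin n) : LipschitzWith 1 (rankVal r) := by
  refine LipschitzWith.of_le_add fun y z => ?_
  rw [rankVal_le_iff]
  refine ((rankVal_le_iff r z _).1 le_rfl).trans_le (Finset.card_le_card fun i hi => ?_)
  simp only [Finset.mem_filter, Finset.mem_univ, true_and] at hi ⊢
  have h1 := (abs_le.1 ((Real.dist_eq (y i) (z i)).symm.le.trans (dist_le_pi_dist y z i))).2
  linarith

/-- If the entries of `y` are distinct, a small perturbation of `y` is sorted by the same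
permutation, so `rankVal r` is locally the coordinate that realises it. -/
lemma hasDerivAt_rankVal {n : ℕ} (r : Fin n) (y c : Fin n → ℝ) (hy : Function.Injective y) :
    HasDerivAt (fun t : ℝ => rankVal r (fun i => y i + t * c i)) (c (Tuple.sort y r.rev)) 0 := by
  have hs : StrictMono (y ∘ Tuple.sort y) :=
    (Tuple.monotone_sort y).strictMono_of_injective (hy.comp (Tuple.sort y).injective)
  have hev : ∀ᶠ t : ℝ in 𝓝 0, ∀ i j : Fin n, i < j →
      y (Tuple.sort y i) + t * c (Tuple.sort y i) < y (Tuple.sort y j) + t * c (Tuple.sort y j) := by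
    simp only [eventually_all]
    intro i j hij
    refine ContinuousAt.eventually_lt (by fun_prop) (by fun_prop) ?_
    simpa using hs hij
  have heq : (fun t : ℝ => rankVal r (fun i => y i + t * c i)) =ᶠ[𝓝 0]
      fun t => y (Tuple.sort y r.rev) + t * c (Tuple.sort y r.rev) := by
    filter_upwards [hev] with t ht
    have : Tuple.sort y = Tuple.sort (fun i => y i + t * c i) := by
      rw [Tuple.eq_sort_iff]
      have hm : StrictMono ((fun i => y i + t * c i) ∘ Tuple.sort y) := fun i j hij => ht i j hij
      exact ⟨hm.monotone, fun i j hij h => absurd h (hm hij).ne⟩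
    rw [rankVal, ← this]
  refine HasDerivAt.congr_of_eventuallyEq ?_ heq
  simpa using ((hasDerivAt_id (0 : ℝ)).mul_const (c (Tuple.sort y r.rev))).const_add
    (y (Tuple.sort y r.rev))

/-! ### Exponential moments and the Cameron–Martin shift -/

section Gaussian

variable {Ω : Type*} [MeasurableSpace Ω] {μ : Measure Ω} {n : ℕ}
  {X : Fin (n + 1) → Ω → ℝ} {m : Fin (n + 1) → ℝ} {S : Matrix (Fin (n + 1)) (Fin (n + 1)) ℝ}

lemma quadForm_nonneg {k : ℕ} {S : Matrix (Fin k) (Fin k) ℝ} (hS : S.PosSemidef)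
    (a : Fin k → ℝ) : 0 ≤ ∑ i, ∑ j, a i * S i j * a j := by
  have := hS.dotProduct_mulVec_nonneg a
  simpa [dotProduct, Matrix.mulVec, Finset.mul_sum, mul_assoc] using this

lemma quadForm_single_add (hS : S.PosSemidef) (t : ℝ) (a : Fin (n + 1) → ℝ) :
    ∑ i, ∑ j, (Pi.single 0 t + a : Fin (n + 1) → ℝ) i * S i j * (Pi.single 0 t + a : Fin (n + 1) → ℝ) j =
      t ^ 2 * S 0 0 + 2 * t * ∑ i, a i * S 0 i + ∑ i, ∑ j, a i * S i j * a j := by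
  have hsym : ∀ i, S i 0 = S 0 i := fun i => by
    simpa using hS.isHermitian.apply 0 i
  simp only [Pi.add_apply, add_mul, mul_add, Finset.sum_add_distrib]
  have h1 : ∑ i, ∑ j, (Pi.single 0 t : Fin (n+1) → ℝ) i * S i j * (Pi.single 0 t : Fin (n+1) → ℝ) j
      = t ^ 2 * S 0 0 := by
    simp [Pi.single_apply]; ring
  have h2 : ∑ i, ∑ j, (Pi.single 0 t : Fin (n+1) → ℝ) i * S i j * a j = t * ∑ i, a i * S 0 i := by
    simp [Pi.single_apply, Finset.mul_sum]
    exact Finset.sum_congr rfl fun i _ => by ring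
  have h3 : ∑ i, ∑ j, a i * S i j * (Pi.single 0 t : Fin (n+1) → ℝ) j = t * ∑ i, a i * S 0 i := by
    simp [Pi.single_apply, Finset.mul_sum, hsym]
    exact Finset.sum_congr rfl fun i _ => by ring
  rw [h1, h2, h3]; ring

lemma integrable_exp_linear (hmeas : ∀ i, Measurable (X i))
    (hg : IsMultivariateGaussian μ X m S) (a : Fin (n + 1) → ℝ) :
    Integrable (fun ω => exp (∑ i, a i * X i ω)) μ := by
  have h := integrable_exp_mul_gaussianReal (μ := ∑ i, a i * m i)
    (v := Real.toNNReal (∑ i, ∑ j, a i * S i j * a j)) 1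
  rw [← hg.2 a, integrable_map_measure (by fun_prop) (by fun_prop)] at h
  simpa [Function.comp_def] using h

lemma integral_exp_linear (hg : IsMultivariateGaussian μ X m S) (a : Fin (n + 1) → ℝ) :
    ∫ ω, exp (∑ i, a i * X i ω) ∂μ =
      exp (∑ i, a i * m i + (∑ i, ∑ j, a i * S i j * a j) / 2) := by
  have h := mgf_gaussianReal (hg.2 a) 1
  simpa [mgf, Real.coe_toNNReal _ (quadForm_nonneg hg.1 a)] using h

lemma exp_first_eq {Ω : Type*} {X : Fin (n + 1) → Ω → ℝ} (t : ℝ) (ω : Ω) :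
    exp (t * X 0 ω) = exp (∑ i, (Pi.single 0 t : Fin (n + 1) → ℝ) i * X i ω) := by
  simp [Pi.single_apply]

lemma integrable_exp_first (hmeas : ∀ i, Measurable (X i))
    (hg : IsMultivariateGaussian μ X m S) (t : ℝ) :
    Integrable (fun ω => exp (t * X 0 ω)) μ := by
  simp_rw [exp_first_eq]
  exact integrable_exp_linear hmeas hg _

lemma integral_exp_first (hg : IsMultivariateGaussian μ X m S) (t : ℝ) :
    ∫ ω, exp (t * X 0 ω) ∂μ = exp (t * m 0 + t ^ 2 * S 0 0 / 2) := by
  simp_rw [exp_first_eq]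
  rw [integral_exp_linear hg]
  have := quadForm_single_add hg.1 t 0
  simp only [add_zero] at this
  rw [this]
  simp [Pi.single_apply]

/-- Cameron–Martin: tilting by `exp (t * X 0)` shifts the law of the Gaussian vector `X` by `t` times
the row `S 0` of the covariance matrix. -/
lemma map_tilted_eq_map_shift [IsProbabilityMeasure μ] (hmeas : ∀ i, Measurable (X i))
    (hg : IsMultivariateGaussian μ X m S) (t : ℝ) :
    (μ.tilted (fun ω => t * X 0 ω)).map (fun ω i => X i ω) =
      μ.map (fun ω i => X i ω + t * S 0 i) := by
  have hXm : Measurable (fun ω i => X i ω) := measurable_pi_lambda _ hmeas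
  have hYm : Measurable (fun ω i => X i ω + t * S 0 i) :=
    measurable_pi_lambda _ fun i => (hmeas i).add_const _
  have hprob : IsProbabilityMeasure (μ.tilted (fun ω => t * X 0 ω)) :=
    isProbabilityMeasure_tilted (integrable_exp_first hmeas hg t)
  have hp1 := Measure.isProbabilityMeasure_map (μ := μ.tilted (fun ω => t * X 0 ω))
    hXm.aemeasurable
  have hp2 := Measure.isProbabilityMeasure_map (μ := μ) hYm.aemeasurable
  refine Measure.ext_of_charFunDual ?_
  ext L
  rw [charFunDual_eq_charFun_map_one, charFunDual_eq_charFun_map_one,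
    Measure.map_map (by fun_prop) hXm, Measure.map_map (by fun_prop) hYm]
  congr 1
  set a : Fin (n + 1) → ℝ := fun i => L (Pi.single i 1) with ha
  have hL : ∀ x : Fin (n + 1) → ℝ, L x = ∑ i, a i * x i := fun x => by
    conv_lhs => rw [pi_eq_sum_univ' x]
    simp [map_sum, ha, mul_comm]
  have e1 : (L ∘ fun ω i => X i ω) = fun ω => ∑ i, a i * X i ω := funext fun ω => hL _
  have e2 : (L ∘ fun ω i => X i ω + t * S 0 i) =
      fun ω => ∑ i, a i * X i ω + t * ∑ i, a i * S 0 i := by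
    funext ω
    rw [Function.comp_apply, hL, Finset.mul_sum, ← Finset.sum_add_distrib]
    exact Finset.sum_congr rfl fun i _ => by ring
  rw [e1, e2]
  have hmgf : mgf (fun ω => ∑ i, a i * X i ω) (μ.tilted (fun ω => t * X 0 ω)) =
      mgf (fun ω => ∑ i, a i * X i ω + t * ∑ i, a i * S 0 i) μ := by
    funext s
    have hs : ∀ ω, s * ∑ i, a i * X i ω = ∑ i, (s • a) i * X i ω := fun ω => by
      simp [Finset.mul_sum, mul_assoc]
    simp only [mgf]
    rw [integral_tilted, integral_exp_first hg]
    have l1 : ∀ ω, (exp (t * X 0 ω) / exp (t * m 0 + t ^ 2 * S 0 0 / 2)) •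
        exp (s * ∑ i, a i * X i ω) = exp (∑ i, (Pi.single 0 t + s • a : Fin (n + 1) → ℝ) i * X i ω) /
          exp (t * m 0 + t ^ 2 * S 0 0 / 2) := fun ω => by
      rw [hs, exp_first_eq, smul_eq_mul, div_mul_eq_mul_div, ← exp_add, ← Finset.sum_add_distrib]
      simp [add_mul]
    have l2 : ∀ ω, exp (s * (∑ i, a i * X i ω + t * ∑ i, a i * S 0 i)) =
        exp (∑ i, (s • a) i * X i ω) * exp (s * (t * ∑ i, a i * S 0 i)) := fun ω => by
      rw [mul_add, hs, exp_add]
    simp_rw [l1, l2]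
    rw [integral_div, integral_mul_const, integral_exp_linear hg, integral_exp_linear hg,
      quadForm_single_add hg.1, ← exp_sub, ← exp_add]
    congr 1
    have k1 : ∑ i, (Pi.single 0 t + s • a : Fin (n + 1) → ℝ) i * m i = t * m 0 + ∑ i, (s • a) i * m i := by
      simp [add_mul, Finset.sum_add_distrib, Pi.single_apply]
    have k2 : ∑ i, (s • a) i * S 0 i = s * ∑ i, a i * S 0 i := by
      simp [Finset.mul_sum, mul_assoc]
    rw [k1, k2]; ring
  -- Both moment generating functions are finite on all of `ℝ`, so the strip on which their equality
  -- extends to the complex moment generating functions is all of `ℂ`.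
  have hset : integrableExpSet (fun ω => ∑ i, a i * X i ω) (μ.tilted (fun ω => t * X 0 ω))
      = Set.univ := by
    rw [integrableExpSet_eq_of_mgf hmgf, Set.eq_univ_iff_forall]
    intro s
    have := (integrable_exp_linear hmeas hg (s • a)).mul_const (exp (s * (t * ∑ i, a i * S 0 i)))
    refine this.congr (ae_of_all _ fun ω => ?_)
    simp only
    rw [← exp_add]
    simp [Finset.mul_sum, mul_add, mul_assoc]
  refine Measure.ext_of_complexMGF_eq (by fun_prop) (by fun_prop) (funext fun z => ?_)
  exact eqOn_complexMGF_of_mgf hmgf (by simp [hset])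

/-! ### Stein's lemma for Lipschitz functions -/

lemma integrable_exp_abs (hmeas : ∀ i, Measurable (X i))
    (hg : IsMultivariateGaussian μ X m S) (i : Fin (n + 1)) :
    Integrable (fun ω => exp (2 * |X 0 ω| + |X i ω|)) μ := by
  have h : ∀ s u : ℝ, Integrable (fun ω => exp (s * X 0 ω + u * X i ω)) μ := fun s u => by
    refine (integrable_exp_linear hmeas hg (Pi.single 0 s + Pi.single i u)).congr
      (ae_of_all _ fun ω => ?_)
    simp [add_mul, Finset.sum_add_distrib, Pi.single_apply]
  refine ((((h 2 1).add (h 2 (-1))).add (h (-2) 1)).add (h (-2) (-1))).mono'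
    (by fun_prop) (ae_of_all _ fun ω => ?_)
  rw [Real.norm_of_nonneg (exp_pos _).le]
  simp only [Pi.add_apply]
  have p1 := exp_pos (2 * X 0 ω + 1 * X i ω)
  have p2 := exp_pos (2 * X 0 ω + -1 * X i ω)
  have p3 := exp_pos (-2 * X 0 ω + 1 * X i ω)
  have p4 := exp_pos (-2 * X 0 ω + -1 * X i ω)
  rcases abs_choice (X 0 ω) with h0 | h0 <;> rcases abs_choice (X i ω) with h1 | h1 <;>
    rw [h0, h1]
  · rw [show 2 * X 0 ω + X i ω = 2 * X 0 ω + 1 * X i ω by ring]; linarith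
  · rw [show 2 * X 0 ω + -X i ω = 2 * X 0 ω + -1 * X i ω by ring]; linarith
  · rw [show 2 * -X 0 ω + X i ω = -2 * X 0 ω + 1 * X i ω by ring]; linarith
  · rw [show 2 * -X 0 ω + -X i ω = -2 * X 0 ω + -1 * X i ω by ring]; linarith

/-- The dominating function for `f(X)` and for the `t`-derivative of `exp (t * X 0) * f(X)` with
`|t| ≤ 1`. -/
lemma stein_bound {K : NNReal} {f : (Fin (n + 1) → ℝ) → ℝ} (hf : LipschitzWith K f)
    (x : Fin (n + 1) → ℝ) :
    |f x| * exp (2 * |x 0|) ≤ (|f 0| + K) * ∑ i, exp (2 * |x 0| + |x i|) := by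
  have hx : ‖x‖ ≤ ∑ i, |x i| := by
    refine (pi_norm_le_iff_of_nonneg (Finset.sum_nonneg fun i _ => abs_nonneg _)).2 fun i => ?_
    exact Finset.single_le_sum (f := fun i => |x i|) (fun i _ => abs_nonneg _) (Finset.mem_univ i)
  have h1 : |f x| ≤ |f 0| + K * ∑ i, |x i| := by
    have := hf.dist_le_mul x 0
    rw [Real.dist_eq, dist_zero_right] at this
    have h2 := abs_sub_abs_le_abs_sub (f x) (f 0)
    have h3 := mul_le_mul_of_nonneg_left hx K.coe_nonneg
    linarith
  have h2 : (1 : ℝ) ≤ ∑ i, exp |x i| :=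
    (Real.one_le_exp (abs_nonneg (x 0))).trans
      (Finset.single_le_sum (f := fun i => exp |x i|) (fun i _ => (exp_pos _).le)
        (Finset.mem_univ 0))
  have h3 : ∑ i, |x i| ≤ ∑ i, exp |x i| := Finset.sum_le_sum fun i _ => by
    linarith [Real.add_one_le_exp |x i|]
  have h4 : |f x| ≤ (|f 0| + K) * ∑ i, exp |x i| := by
    nlinarith [abs_nonneg (f 0), K.coe_nonneg]
  simp_rw [exp_add, ← Finset.mul_sum]
  calc |f x| * exp (2 * |x 0|) ≤ ((|f 0| + K) * ∑ i, exp |x i|) * exp (2 * |x 0|) := by gcongr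
    _ = _ := by ring

lemma integrable_lipschitz (hmeas : ∀ i, Measurable (X i))
    (hg : IsMultivariateGaussian μ X m S) {K : NNReal} {f : (Fin (n + 1) → ℝ) → ℝ}
    (hf : LipschitzWith K f) : Integrable (fun ω => f (fun i => X i ω)) μ := by
  have hXm : Measurable (fun ω i => X i ω) := measurable_pi_lambda _ hmeas
  refine ((integrable_finsetSum Finset.univ fun i _ =>
    integrable_exp_abs hmeas hg i).const_mul (|f 0| + K)).mono'
    (hf.continuous.measurable.comp hXm).aestronglyMeasurable (ae_of_all _ fun ω => ?_)
  refine le_trans ?_ (stein_bound hf (fun i => X i ω))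
  exact le_mul_of_one_le_right (abs_nonneg _) (Real.one_le_exp (by positivity))

/-- Stein's lemma for a Lipschitz function `f` of a Gaussian vector `X`, where `D` is the directional
derivative of `f` at `X` along the row `S 0` of the covariance matrix, assumed to exist almost
surely. -/
theorem stein_lipschitz [IsProbabilityMeasure μ] (hmeas : ∀ i, Measurable (X i))
    (hg : IsMultivariateGaussian μ X m S) {K : NNReal} {f : (Fin (n + 1) → ℝ) → ℝ}
    (hf : LipschitzWith K f) {D : Ω → ℝ} (hD : AEStronglyMeasurable D μ)
    (hderiv : ∀ᵐ ω ∂μ, HasDerivAt (fun t : ℝ => f (fun i => X i ω + t * S 0 i)) (D ω) 0) :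
    ∫ ω, X 0 ω * f (fun i => X i ω) ∂μ = m 0 * ∫ ω, f (fun i => X i ω) ∂μ + ∫ ω, D ω ∂μ := by
  have hXm : Measurable (fun ω i => X i ω) := measurable_pi_lambda _ hmeas
  have hfm := hf.continuous.measurable
  have hYm : ∀ t : ℝ, Measurable (fun ω i => X i ω + t * S 0 i) := fun t =>
    measurable_pi_lambda _ fun i => (hmeas i).add_const _
  have hfX : Measurable fun ω => f (fun i => X i ω) := hfm.comp hXm
  have hfint := integrable_lipschitz hmeas hg hf
  have key : ∀ t : ℝ, ∫ ω, exp (t * X 0 ω) * f (fun i => X i ω) ∂μ =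
      exp (t * m 0 + t ^ 2 * S 0 0 / 2) * ∫ ω, f (fun i => X i ω + t * S 0 i) ∂μ := fun t => by
    have h1 := integral_map (hYm t).aemeasurable (μ := μ) (f := f) hfm.aestronglyMeasurable
    rw [← map_tilted_eq_map_shift hmeas hg t,
      integral_map hXm.aemeasurable hfm.aestronglyMeasurable, integral_tilted,
      integral_exp_first hg] at h1
    rw [← h1, ← integral_const_mul]
    refine integral_congr_ae (ae_of_all _ fun ω => ?_)
    simp only [smul_eq_mul]
    field_simp
  have hL : HasDerivAt (fun t : ℝ => ∫ ω, exp (t * X 0 ω) * f (fun i => X i ω) ∂μ)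
      (∫ ω, X 0 ω * exp (0 * X 0 ω) * f (fun i => X i ω) ∂μ) 0 := by
    refine (hasDerivAt_integral_of_dominated_loc_of_deriv_le
      (F := fun t ω => exp (t * X 0 ω) * f (fun i => X i ω))
      (F' := fun t ω => X 0 ω * exp (t * X 0 ω) * f (fun i => X i ω))
      (s := Metric.ball 0 1) (Metric.ball_mem_nhds _ one_pos)
      (Eventually.of_forall fun t => ?_) (by simpa using hfint) ?_ ?_
      ((integrable_finsetSum Finset.univ fun i _ =>
        integrable_exp_abs hmeas hg i).const_mul (|f 0| + K)) ?_).2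
    · exact Measurable.aestronglyMeasurable (by fun_prop)
    · exact Measurable.aestronglyMeasurable (by fun_prop)
    · refine ae_of_all _ fun ω t ht => ?_
      refine le_trans ?_ (stein_bound hf (fun i => X i ω))
      rw [norm_mul, norm_mul, Real.norm_eq_abs, Real.norm_eq_abs, Real.norm_eq_abs, abs_exp,
        mul_comm]
      gcongr
      have h1 : |X 0 ω| ≤ exp |X 0 ω| := by linarith [Real.add_one_le_exp |X 0 ω|]
      have h2 : t * X 0 ω ≤ |X 0 ω| := by
        refine (le_abs_self _).trans ?_
        rw [abs_mul]
        have : |t| ≤ 1 := by simpa using (mem_ball_zero_iff.1 ht).le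
        exact mul_le_of_le_one_left (abs_nonneg _) this
      rw [two_mul, exp_add]
      gcongr
    · refine ae_of_all _ fun ω t _ => ?_
      have h1 : HasDerivAt (fun t : ℝ => exp (t * X 0 ω)) (X 0 ω * exp (t * X 0 ω)) t := by
        simpa [mul_comm] using ((hasDerivAt_id t).mul_const (X 0 ω)).exp
      exact h1.mul_const _
  have hR1 : HasDerivAt (fun t : ℝ => ∫ ω, f (fun i => X i ω + t * S 0 i) ∂μ) (∫ ω, D ω ∂μ) 0 := by
    refine (hasDerivAt_integral_of_dominated_loc_of_lip
      (F := fun t ω => f (fun i => X i ω + t * S 0 i))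
      (bound := fun _ => (K : ℝ) * ‖S 0‖) (s := Set.univ) univ_mem
      (Eventually.of_forall fun t => (hfm.comp (hYm t)).aestronglyMeasurable)
      (by simpa using hfint) hD (ae_of_all _ fun ω => ?_) (integrable_const _) hderiv).2
    refine LipschitzWith.lipschitzOnWith (LipschitzWith.of_dist_le_mul fun t u => ?_)
    refine (hf.dist_le_mul _ _).trans ?_
    rw [Real.coe_nnabs, abs_of_nonneg (by positivity), mul_assoc]
    gcongr
    refine (dist_pi_le_iff (by positivity)).2 fun i => ?_
    rw [Real.dist_eq, Real.dist_eq, add_sub_add_left_eq_sub, ← sub_mul, abs_mul, mul_comm]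
    gcongr
    exact norm_le_pi_norm (S 0) i
  have hR2 : HasDerivAt (fun t : ℝ => exp (t * m 0 + t ^ 2 * S 0 0 / 2)) (m 0) 0 := by
    have h1 : HasDerivAt (fun t : ℝ => t * m 0 + t ^ 2 * S 0 0 / 2) (m 0) 0 := by
      have := ((hasDerivAt_id (0 : ℝ)).mul_const (m 0)).add
        (((hasDerivAt_pow 2 (0 : ℝ)).mul_const (S 0 0)).div_const 2)
      exact this.congr_deriv (by simp)
    simpa using h1.exp
  have hR := hR2.mul hR1
  rw [funext key] at hL
  have := hL.unique hR
  simpa using this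

end Gaussian

/-- **Rinott–Samuel-Cahn (1994), part (2).**
If `(X 0, X 1, ..., X n)` is multivariate normal with arbitrary mean vector and covariance
matrix and its coordinates are a.s. pairwise distinct, and `X̃^{(r)}` denotes the `r`-th
order statistic of the subvector `(X 1, ..., X n)`, then
`Cov(X 0, X̃^{(r)}) = ∑_{i=1}^{n} Cov(X 0, X i) * P(X i = X̃^{(r)})`. -/
theorem covar_orderStat_tail_eq_sum {Ω : Type*} [MeasurableSpace Ω] (μ : Measure Ω)
    [IsProbabilityMeasure μ] {n : ℕ} (X : Fin (n + 1) → Ω → ℝ)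
    (hmeas : ∀ i, Measurable (X i))
    (m : Fin (n + 1) → ℝ) (S : Matrix (Fin (n + 1)) (Fin (n + 1)) ℝ)
    (hgauss : IsMultivariateGaussian μ X m S)
    (hdist : ∀ᵐ ω ∂μ, ∀ i j, i ≠ j → X i ω ≠ X j ω)
    (r : Fin n) :
    covar μ (X 0) (orderStat (fun i => X i.succ) r) =
      ∑ i : Fin n, covar μ (X 0) (X i.succ) *
        (μ {ω | X i.succ ω = orderStat (fun i => X i.succ) r ω}).toReal := by
  have hmean : ∫ ω, X 0 ω ∂μ = m 0 := by
    simpa using stein_lipschitz hmeas hgauss (f := fun _ => 1) (D := fun _ => 0)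
      (LipschitzWith.const 1) (by fun_prop) (ae_of_all _ fun ω => hasDerivAt_const _ _)
  have hcov : ∀ j, covar μ (X 0) (X j) = S 0 j := fun j => by
    have h := stein_lipschitz hmeas hgauss (f := fun x => x j) (D := fun _ => S 0 j)
      (LipschitzWith.eval j) (by fun_prop) (ae_of_all _ fun ω => by
        simpa using ((hasDerivAt_id (0 : ℝ)).mul_const (S 0 j)).const_add (X j ω))
    rw [covar, h, hmean]
    simp
  have hos : orderStat (fun i => X i.succ) r = fun ω => rankVal r (fun i => X i.succ ω) := rfl
  have hmt : Measurable (fun ω (i : Fin n) => X i.succ ω) :=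
    measurable_pi_lambda _ fun i => hmeas _
  have hosm : Measurable (orderStat (fun i => X i.succ) r) :=
    (lipschitzWith_rankVal r).continuous.measurable.comp hmt
  have hA : ∀ i : Fin n, MeasurableSet {ω | X i.succ ω = orderStat (fun i => X i.succ) r ω} :=
    fun i => measurableSet_eq_fun (hmeas _) hosm
  have hlip : LipschitzWith 1 (fun x : Fin (n + 1) → ℝ => rankVal r (fun i => x i.succ)) := by
    refine (mul_one (1 : NNReal)) ▸ (lipschitzWith_rankVal r).comp ?_
    exact LipschitzWith.of_dist_le_mul fun x y => by
      simpa using (dist_pi_le_iff dist_nonneg).2 fun i : Fin n => dist_le_pi_dist x y i.succ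
  have h := stein_lipschitz hmeas hgauss hlip
    (D := fun ω => ∑ i : Fin n,
      {ω | X i.succ ω = orderStat (fun i => X i.succ) r ω}.indicator (fun _ => S 0 i.succ) ω)
    (Measurable.aestronglyMeasurable (Finset.measurable_fun_sum _ fun i _ =>
      measurable_const.indicator (hA i))) (by
      filter_upwards [hdist] with ω hω
      have hinj : Function.Injective (fun i : Fin n => X i.succ ω) := fun i j hij => by
        by_contra hne
        exact hω _ _ (fun h => hne (Fin.succ_injective n h)) hij
      convert hasDerivAt_rankVal r (fun i => X i.succ ω) (fun i => S 0 i.succ) hinj using 1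
      rw [Finset.sum_eq_single (Tuple.sort (fun i : Fin n => X i.succ ω) r.rev)]
      · refine Set.indicator_of_mem ?_ _
        rw [Set.mem_ofPred_eq]
        rfl
      · intro j _ hj
        refine Set.indicator_of_notMem (fun hmem => hj (hinj ?_)) _
        rw [Set.mem_ofPred_eq] at hmem
        exact hmem
      · simp)
  rw [integral_finsetSum _ fun i _ => (integrable_const _).indicator (hA i)] at h
  rw [covar, hmean, hos]
  rw [h, add_sub_cancel_left]
  refine Finset.sum_congr rfl fun i _ => ?_
  rw [integral_indicator_const _ (hA i), hcov, smul_eq_mul, mul_comm]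
  rfl
end

section
/- Let (ε, Y_1, ..., Y_J) be a random vector whose joint distribution is multivariate normal, with the coordinates Y_1(ω), ..., Y_J(ω) almost surely pairwise distinct. Suppose there is a constant c ∈ ℝ such that Cov(ε, Y_j) = c for every j ∈ {1, ..., J}. Then for every rank r ∈ {1, ..., J}, the covariance of ε with the r-th order statistic of (Y_1, ..., Y_J) equals the common value: Cov(ε, Y^{(r)}) = c. -/
/-!
Put `D j = Y j - Y 0`. Then `Cov(ε, D j) = c - c = 0`, and since `(ε, D)` is a linear image of a
Gaussian vector, `ε` is independent of the whole vector `D`. Order statistics commute with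
adding a common constant, so `Y^{(r)} = Y 0 + D^{(r)}`, where `D^{(r)}` is a measurable function
of `D` and hence independent of `ε`. Therefore
`Cov(ε, Y^{(r)}) = Cov(ε, Y 0) + Cov(ε, D^{(r)}) = c + 0`.
-/

open MeasureTheory ProbabilityTheory Real

/-- The joint law is Gaussian in Mathlib's sense: every continuous linear functional on `ℝⁿ` is a
linear combination of coordinates. -/
lemma IsMultivariateGaussian.hasGaussianLaw {Ω : Type*} [MeasurableSpace Ω] {μ : Measure Ω}
    {n : ℕ} {X : Fin n → Ω → ℝ} {m : Fin n → ℝ} {S : Matrix (Fin n) (Fin n) ℝ}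
    (h : IsMultivariateGaussian μ X m S) (hX : ∀ i, Measurable (X i)) :
    HasGaussianLaw (fun ω => (X · ω)) μ := by
  refine ⟨isGaussian_of_isGaussian_map fun L => ?_⟩
  have hL : ∀ x : Fin n → ℝ, L x = ∑ i, L (Pi.single i 1) * x i := by
    intro x
    conv_lhs => rw [← Finset.univ_sum_single x]
    rw [map_sum]
    refine Finset.sum_congr rfl fun i _ => ?_
    have : (Pi.single i (x i) : Fin n → ℝ) = x i • Pi.single i 1 := by
      rw [← Pi.single_smul]; simp
    rw [this, map_smul, smul_eq_mul, mul_comm]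
  rw [Measure.map_map (by fun_prop) (measurable_pi_lambda _ hX)]
  have hcomp : (⇑L ∘ fun ω => (X · ω)) = fun ω => ∑ i, L (Pi.single i 1) * X i ω :=
    funext fun ω => hL _
  rw [hcomp, h.2 fun i => L (Pi.single i 1)]
  infer_instance

/-- The `k`-th smallest entry is a measurable function of a real tuple: it is piecewise a
coordinate, the pieces being the finitely many measurable sets on which the sorting permutation
is constant. -/
lemma measurable_apply_sort {n : ℕ} (k : Fin n) :
    Measurable fun d : Fin n → ℝ => d (Tuple.sort d k) := by
  have hset : ∀ σ : Equiv.Perm (Fin n), MeasurableSet {d : Fin n → ℝ | σ = Tuple.sort d} := by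
    intro σ
    have hset_eq : {d : Fin n → ℝ | σ = Tuple.sort d} =
        ⋂ (i : Fin n) (j : Fin n) (_ : i ≤ j), ({d : Fin n → ℝ | d (σ i) ≤ d (σ j)} ∩
          {d : Fin n → ℝ | i < j → d (σ i) = d (σ j) → σ i < σ j}) := by
      ext d
      simp only [Set.mem_ofPred_eq, Tuple.eq_sort_iff, Set.mem_iInter, Set.mem_inter_iff]
      exact ⟨fun h i j hij => ⟨h.1 hij, h.2 i j⟩,
        fun h => ⟨fun i j hij => (h i j hij).1, fun i j hij => (h i j hij.le).2 hij⟩⟩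
    rw [hset_eq]
    refine .iInter fun i => .iInter fun j => .iInter fun _ => ?_
    refine (measurableSet_le (by fun_prop) (by fun_prop)).inter ?_
    by_cases hij : i < j <;> by_cases hσ : σ i < σ j <;> simp only [hij, hσ, imp_true_iff,
      forall_const, false_imp_iff, imp_false, MeasurableSet.univ, Set.ofPred_true]
    exact (measurableSet_eq_fun (by fun_prop) (by fun_prop)).compl
  classical
  have hsum : (fun d : Fin n → ℝ => d (Tuple.sort d k)) =
      fun d => ∑ σ : Equiv.Perm (Fin n), if σ = Tuple.sort d then d (σ k) else 0 := by
    ext d; simp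
  rw [hsum]
  exact Finset.measurable_fun_sum _ fun σ _ => .ite (hset σ) (by fun_prop) (by fun_prop)

/-- Sorted values are equivariant under adding a common constant. -/
lemma apply_sort_sub {n : ℕ} (f : Fin n → ℝ) (a : ℝ) (k : Fin n) :
    f (Tuple.sort f k) = a + (fun i => f i - a) (Tuple.sort (fun i => f i - a) k) := by
  have hmono : Monotone (f ∘ Tuple.sort fun i => f i - a) := fun i j hij => by
    simpa using Tuple.monotone_sort (fun i => f i - a) hij
  have h := congrFun (Tuple.comp_sort_eq_comp_iff_monotone.2 hmono) k
  simp only [Function.comp_apply] at h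
  simp [← h]

lemma covar_eq_covariance {Ω : Type*} [MeasurableSpace Ω] {μ : Measure Ω} [IsProbabilityMeasure μ]
    {X Y : Ω → ℝ} (hX : MemLp X 2 μ) (hY : MemLp Y 2 μ) : covar μ X Y = cov[X, Y; μ] := by
  rw [covariance_eq_sub hX hY]; rfl

/-- If `(ε, Y 0, ..., Y (J-1))` is jointly multivariate normal, the `Y j` are a.s. pairwise
distinct, and `Cov(ε, Y j) = c` for every `j`, then for every rank `r` the covariance of `ε`
with the `r`-th order statistic of `(Y 0, ..., Y (J-1))` equals the common value `c`. -/
theorem covar_orderStat_of_const_covar {Ω : Type*} [MeasurableSpace Ω] (μ : Measure Ω)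
    [IsProbabilityMeasure μ] {J : ℕ} (ε : Ω → ℝ) (Y : Fin (J + 1) → Ω → ℝ)
    (hmeasε : Measurable ε) (hmeasY : ∀ j, Measurable (Y j))
    (m : Fin (J + 2) → ℝ) (S : Matrix (Fin (J + 2)) (Fin (J + 2)) ℝ)
    (hgauss : IsMultivariateGaussian μ (Fin.cons ε Y) m S)
    (hdist : ∀ᵐ ω ∂μ, ∀ i j, i ≠ j → Y i ω ≠ Y j ω)
    (c : ℝ) (hc : ∀ j, covar μ ε (Y j) = c)
    (r : Fin (J + 1)) :
    covar μ ε (orderStat Y r) = c := by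
  have hG := hgauss.hasGaussianLaw (Fin.cases hmeasε hmeasY)
  have hε : MemLp ε 2 μ := (hG.eval 0).memLp_two
  have hY : ∀ j, MemLp (Y j) 2 μ := fun j => (hG.eval j.succ).memLp_two
  set D : Fin (J + 1) → Ω → ℝ := fun j ω => Y j ω - Y 0 ω with hD
  have hDL : ∀ j, MemLp (D j) 2 μ := fun j => (hY j).sub (hY 0)
  have hcov : ∀ j, cov[ε, D j; μ] = 0 := fun j => by
    have : D j = Y j - Y 0 := rfl
    rw [this, covariance_sub_right hε (hY j) (hY 0), ← covar_eq_covariance hε (hY j),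
      ← covar_eq_covariance hε (hY 0), hc, hc, sub_self]
  -- `ε` is viewed as a family indexed by `Unit`, so that independence follows coordinatewise.
  have hpair : HasGaussianLaw (fun ω => ((fun _ : Unit => ε ω), fun j => D j ω)) μ :=
    let p : Fin (J + 2) → (Fin (J + 2) → ℝ) →L[ℝ] ℝ := fun i => .proj i
    hG.map_fun ((ContinuousLinearMap.pi fun _ : Unit => p 0).prod
      (.pi fun j : Fin (J + 1) => p j.succ - p (Fin.succ 0)))
  have hind := hpair.indepFun_of_covariance_eval (X := fun _ : Unit => ε) fun _ j => hcov j
  set Z : Ω → ℝ := fun ω => D (Tuple.sort (fun i => D i ω) r.rev) ω with hZ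
  have hindZ : IndepFun ε Z μ :=
    hind.comp (φ := fun x : Unit → ℝ => x ()) (measurable_pi_apply ()) (measurable_apply_sort r.rev)
  have hDmeas : ∀ j, Measurable (D j) := fun j => (hmeasY j).sub (hmeasY 0)
  have hZmeas : Measurable Z :=
    (measurable_apply_sort r.rev).comp (measurable_pi_lambda (fun ω i => D i ω) hDmeas)
  have hZL : MemLp Z 2 μ := by
    refine (memLp_finset_sum Finset.univ fun j _ => (hDL j).norm).mono
      hZmeas.aestronglyMeasurable (.of_forall fun ω => ?_)
    refine le_trans ?_ (le_abs_self _)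
    exact Finset.single_le_sum (f := fun j => ‖D j ω‖) (fun j _ => norm_nonneg _)
      (Finset.mem_univ _)
  have hstat : orderStat Y r = Y 0 + Z :=
    funext fun ω => apply_sort_sub (fun i => Y i ω) (Y 0 ω) r.rev
  rw [hstat, covar_eq_covariance hε ((hY 0).add hZL), covariance_add_right hε (hY 0) hZL,
    hindZ.covariance_eq_zero hε hZL, add_zero, ← covar_eq_covariance hε (hY 0), hc]
end
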